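/- Let (X, ‖·‖) be a uniformly convex Banach space with modulus of convexity δ_X, let r > 0, and let S ⊆ X be an r-convex set, i.e. S = ⋂_{x ∈ M} B(x, r) ≠ ∅ for some M ⊆ X with M ≠ X. Then S is uniformly convex and its modulus of convexity satisfies δ_S(ε) ≥ r · δ_X(ε/r) for every ε ∈ (0, diam S). -/

import Mathlib

open Metric Set
open scoped NNReal ENNReal

/-- The modulus of convexity of a set `S` in a real normed space:
`δ_S(ε) = sup{δ ≥ 0 : B((x₁+x₂)/2, δ) ⊆ S for all x₁, x₂ ∈ S with ‖x₁ − x₂‖ = ε}`. -/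
noncomputable def setModulus {X : Type*} [NormedAddCommGroup X] [NormedSpace ℝ X]
    (S : Set X) (ε : ℝ) : ℝ :=
  sSup {δ : ℝ | 0 ≤ δ ∧ ∀ x₁ ∈ S, ∀ x₂ ∈ S, ‖x₁ - x₂‖ = ε →
    closedBall (midpoint ℝ x₁ x₂) δ ⊆ S}

/-- The exact bound of Lipschitz continuity of `h` on `U`:
the infimum of all Lipschitz constants of `h` on `U`. -/
noncomputable def lipOn {α β : Type*} [PseudoMetricSpace α] [PseudoMetricSpace β]
    (h : α → β) (U : Set α) : ℝ :=
  sInf {ℓ : ℝ | 0 ≤ ℓ ∧ ∀ x₁ ∈ U, ∀ x₂ ∈ U, dist (h x₁) (h x₂) ≤ ℓ * dist x₁ x₂}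

/-- The exact regularity bound of `f` around `x₀`: the infimum of all `κ ≥ 0` such that,
for some `δ > 0`, `dist(x, f⁻¹(y)) ≤ κ‖y − f(x)‖` for all `x ∈ B(x₀, δ)`, `y ∈ B(f(x₀), δ)`;
it equals `+∞` when `f` is not metrically regular around `x₀`. -/
noncomputable def regBound {X Y : Type*} [NormedAddCommGroup X] [NormedAddCommGroup Y]
    (f : X → Y) (x₀ : X) : ℝ≥0∞ :=
  sInf (ENNReal.ofReal '' {κ : ℝ | 0 ≤ κ ∧ ∃ δ > 0,
    ∀ x ∈ closedBall x₀ δ, ∀ y ∈ closedBall (f x₀) δ,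
      Metric.infDist x {x' | f x' = y} ≤ κ * ‖y - f x‖})

/-- `S ∈ U_c(X)`: `S` is a nonempty closed convex set whose modulus of convexity
satisfies `δ_S(ε) ≥ cε²` for all `ε ∈ (0, diam S)`. -/
def UniformlyConvexWith {X : Type*} [NormedAddCommGroup X] [NormedSpace ℝ X]
    (c : ℝ) (S : Set X) : Prop :=
  S.Nonempty ∧ IsClosed S ∧ Convex ℝ S ∧
    ∀ ε : ℝ, 0 < ε → ε < Metric.diam S → c * ε ^ 2 ≤ setModulus S ε

/-- The modulus of convexity of a normed space
`δ_X(ε) = inf{1 − ‖(x₁+x₂)/2‖ : x₁, x₂ ∈ B̄(0,1), ‖x₁ − x₂‖ = ε}`. -/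
noncomputable def spaceModulus (X : Type*) [NormedAddCommGroup X] [NormedSpace ℝ X]
    (ε : ℝ) : ℝ :=
  sInf {d : ℝ | ∃ x₁ ∈ closedBall (0 : X) 1, ∃ x₂ ∈ closedBall (0 : X) 1,
    ‖x₁ - x₂‖ = ε ∧ d = 1 - ‖midpoint ℝ x₁ x₂‖}

/-- `S` is `r`-convex (strongly convex of radius `r`): a nonempty intersection
`⋂_{x ∈ M} B̄(x, r)` for some `M ⊊ X`. -/
def RConvex {X : Type*} [NormedAddCommGroup X] (r : ℝ) (S : Set X) : Prop :=
  S.Nonempty ∧ ∃ M : Set X, M ≠ Set.univ ∧ S = ⋂ x ∈ M, closedBall x r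

/-- `f` is open at a linear rate around `x₀`. -/
def OpenAtLinearRate {X Y : Type*} [PseudoMetricSpace X] [PseudoMetricSpace Y]
    (f : X → Y) (x₀ : X) : Prop :=
  ∃ δ > (0 : ℝ), ∃ ζ > (0 : ℝ), ∃ σ > (0 : ℝ), ∀ x ∈ closedBall x₀ δ, ∀ r ∈ Icc (0 : ℝ) δ,
    closedBall (f x) (σ * r) ∩ closedBall (f x₀) ζ ⊆ f '' closedBall x r

theorem aux_mid {X : Type*} [NormedAddCommGroup X] [NormedSpace ℝ X]
    (r : ℝ) (hr : 0 < r) (ε : ℝ) (a x₁ x₂ : X) (h₁ : ‖x₁ - a‖ ≤ r) (h₂ : ‖x₂ - a‖ ≤ r)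
    (h : ‖x₁ - x₂‖ = ε) : ‖midpoint ℝ x₁ x₂ - a‖ ≤ r - r * spaceModulus X (ε / r) := by
  have hball : ∀ x : X, ‖x - a‖ ≤ r → r⁻¹ • (x - a) ∈ closedBall (0 : X) 1 := by
    intro x hx
    rw [mem_closedBall_zero_iff, norm_smul, norm_inv, Real.norm_of_nonneg hr.le,
      inv_mul_le_iff₀ hr]
    simpa using hx
  have hle : spaceModulus X (ε / r) ≤ 1 - ‖midpoint ℝ (r⁻¹ • (x₁ - a)) (r⁻¹ • (x₂ - a))‖ := by
    apply csInf_le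
    · refine ⟨0, ?_⟩
      rintro d ⟨u, hu, v, hv, -, rfl⟩
      have := (convex_closedBall (0 : X) 1).midpoint_mem hu hv
      rw [mem_closedBall_zero_iff] at this
      linarith
    · refine ⟨_, hball x₁ h₁, _, hball x₂ h₂, ?_, rfl⟩
      rw [← smul_sub, sub_sub_sub_cancel_right, norm_smul, norm_inv, Real.norm_of_nonneg hr.le, h]
      field_simp
  have he : midpoint ℝ (r⁻¹ • (x₁ - a)) (r⁻¹ • (x₂ - a)) = r⁻¹ • (midpoint ℝ x₁ x₂ - a) := by
    simp only [midpoint_eq_smul_add, invOf_eq_inv]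
    module
  rw [he, norm_smul, norm_inv, Real.norm_of_nonneg hr.le] at hle
  have := mul_le_mul_of_nonneg_left hle hr.le
  rw [mul_sub, mul_inv_cancel_left₀ hr.ne'] at this
  linarith

/-- Example 2.2 (ii) of the paper: in a uniformly convex Banach space, every
`r`-convex (strongly convex of radius `r`) set is uniformly convex, with
`δ_S(ε) ≥ r · δ_X(ε/r)` for all `ε ∈ (0, diam S)`. -/
theorem strongly_convex_set_is_uniformly_convex
    {X : Type*} [NormedAddCommGroup X] [NormedSpace ℝ X] [CompleteSpace X]
    -- X is uniformly convex
    (hX : ∀ ε : ℝ, 0 < ε → ε ≤ 2 → 0 < spaceModulus X ε)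
    (r : ℝ) (hr : 0 < r) (S : Set X) (hS : RConvex r S) :
    (∀ ε : ℝ, 0 < ε → ε < Metric.diam S → 0 < setModulus S ε) ∧
      ∀ ε : ℝ, 0 < ε → ε < Metric.diam S →
        r * spaceModulus X (ε / r) ≤ setModulus S ε := by
  obtain ⟨hne, M, -, hM⟩ := hS
  have key : ∀ ε : ℝ, 0 < ε → ε < Metric.diam S →
      0 < r * spaceModulus X (ε / r) ∧ r * spaceModulus X (ε / r) ≤ setModulus S ε := by
    intro ε hε hd
    have hbdd : Bornology.IsBounded S := by
      by_contra hb
      rw [Metric.diam_eq_zero_of_unbounded hb] at hd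
      linarith
    have hconv : Convex ℝ S := by
      rw [hM]
      exact convex_iInter₂ fun x _ => convex_closedBall x r
    obtain ⟨p, hp, q, hq, hpq⟩ : ∃ p ∈ S, ∃ q ∈ S, ε < dist p q := by
      by_contra! hcon
      exact absurd (Metric.diam_le_of_forall_dist_le hε.le hcon) (not_le.2 hd)
    have hMne : M.Nonempty := by
      by_contra hemp
      rw [Set.not_nonempty_iff_eq_empty] at hemp
      subst hemp
      have hS : S = univ := by simpa using hM
      -- S = univ would be bounded
      have hpq0 : 0 < dist p q := hε.trans hpq
      have h1 := Metric.dist_le_diam_of_mem hbdd (x := p + ((diam S + 1) / dist p q) • (p - q))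
        (y := p) (by rw [hS]; trivial) hp
      rw [dist_eq_norm, add_sub_cancel_left, norm_smul, ← dist_eq_norm,
        Real.norm_of_nonneg (by have := Metric.diam_nonneg (s := S); positivity),
        div_mul_cancel₀ _ hpq0.ne'] at h1
      linarith
    have hmem : ∀ x, x ∈ S ↔ ∀ a ∈ M, ‖x - a‖ ≤ r := by
      intro x
      rw [hM]
      simp [dist_eq_norm]
    have hε2 : ε / r ≤ 2 := by
      obtain ⟨a, ha⟩ := hMne
      have h1 := (hmem p).1 hp a ha
      have h2 := (hmem q).1 hq a ha
      rw [← dist_eq_norm] at h1 h2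
      have := dist_triangle_right p q a
      rw [div_le_iff₀ hr]
      linarith
    have hpos : 0 < r * spaceModulus X (ε / r) := mul_pos hr (hX _ (div_pos hε hr) hε2)
    refine ⟨hpos, le_csSup ?_ ⟨hpos.le, ?_⟩⟩
    · refine ⟨diam S, ?_⟩
      rintro δ ⟨hδ, hsub⟩
      have hpq0 : 0 < dist p q := hε.trans hpq
      -- a point on the segment at distance ε from p
      have hz : p + (ε / dist p q) • (q - p) ∈ S :=
        hconv.add_smul_sub_mem hp hq ⟨by positivity, (div_le_one hpq0).2 hpq.le⟩
      set z := p + (ε / dist p q) • (q - p) with hzdef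
      have hzn : ‖z - p‖ = ε := by
        rw [hzdef, add_sub_cancel_left, norm_smul, ← dist_eq_norm, dist_comm q p,
          Real.norm_of_nonneg (by positivity), div_mul_cancel₀ _ hpq0.ne']
      have hs := hsub z hz p hp hzn
      have hnw : ‖(δ / ε) • (z - p)‖ = δ := by
        rw [norm_smul, hzn, Real.norm_of_nonneg (by positivity), div_mul_cancel₀ _ hε.ne']
      have hw : midpoint ℝ z p + (δ / ε) • (z - p) ∈ S := by
        apply hs
        rw [mem_closedBall, dist_eq_norm, add_sub_cancel_left, hnw]
      have h1 := Metric.dist_le_diam_of_mem hbdd hw (hconv.midpoint_mem hz hp)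
      rwa [dist_eq_norm, add_sub_cancel_left, hnw] at h1
    · intro x₁ hx₁ x₂ hx₂ h y hy
      rw [hmem]
      intro a ha
      have h1 := aux_mid r hr ε a x₁ x₂ ((hmem _).1 hx₁ a ha) ((hmem _).1 hx₂ a ha) h
      rw [mem_closedBall, dist_eq_norm] at hy
      have := norm_sub_le_norm_sub_add_norm_sub y (midpoint ℝ x₁ x₂) a
      linarith
  exact ⟨fun ε h1 h2 => (key ε h1 h2).1.trans_le (key ε h1 h2).2, fun ε h1 h2 => (key ε h1 h2).2⟩
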